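/- There exist a Borel vector field v on ℝ² with compact support such that |v| is Lebesgue integrable, and a continuous probability density ϱ on ℝ² that is proportional to the standard Gaussian density ϱ₂(x) = (2π)^{-1}exp(−|x|²/2) outside of some ball, such that the probability measure μ with density ϱ satisfies the Fokker–Planck–Kolmogorov equation L_b^*μ = 0 with b(x) = −x + v(x), the functions |x| and |v(x)| are μ-integrable, but ϱ does not belong to W^{1,1}_loc(ℝ²). -/

import Mathlib

open MeasureTheory Real

noncomputable section

/-- First partial derivative (with respect to the first coordinate) on `ℝ²`. -/
def pd1 (f : ℝ × ℝ → ℝ) (p : ℝ × ℝ) : ℝ := fderiv ℝ f p (1, 0)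

/-- Second partial derivative (with respect to the second coordinate) on `ℝ²`. -/
def pd2 (f : ℝ × ℝ → ℝ) (p : ℝ × ℝ) : ℝ := fderiv ℝ f p (0, 1)

/-- Test functions: smooth compactly supported functions on `ℝ²`. -/
def IsTest (φ : ℝ × ℝ → ℝ) : Prop := ContDiff ℝ (⊤ : ℕ∞) φ ∧ HasCompactSupport φ

/-- Euclidean magnitude of a vector in `ℝ²`. -/
def emag (v : ℝ × ℝ) : ℝ := Real.sqrt (v.1 ^ 2 + v.2 ^ 2)

/-- Density of the standard Gaussian measure on `ℝ²`. -/
def gauss2 (p : ℝ × ℝ) : ℝ := (2 * π)⁻¹ * Real.exp (-(p.1 ^ 2 + p.2 ^ 2) / 2)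

/-- Membership in the Sobolev class `W^{1,1}(ℝ²)`: the function is integrable and possesses
integrable weak first-order partial derivatives. -/
def MemW11 (f : ℝ × ℝ → ℝ) : Prop :=
  Integrable f ∧
    ∃ g₁ g₂ : ℝ × ℝ → ℝ, Integrable g₁ ∧ Integrable g₂ ∧
      (∀ φ : ℝ × ℝ → ℝ, IsTest φ → ∫ p, g₁ p * φ p = - ∫ p, f p * pd1 φ p) ∧
      (∀ φ : ℝ × ℝ → ℝ, IsTest φ → ∫ p, g₂ p * φ p = - ∫ p, f p * pd2 φ p)

/-- Membership in `W^{1,1}_loc(ℝ²)`: `ζ f ∈ W^{1,1}(ℝ²)` for every test function `ζ`. -/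
def MemW11loc (f : ℝ × ℝ → ℝ) : Prop :=
  ∀ ζ : ℝ × ℝ → ℝ, IsTest ζ → MemW11 (fun p => ζ p * f p)


def lap (φ : ℝ × ℝ → ℝ) (p : ℝ × ℝ) : ℝ := pd1 (pd1 φ) p + pd2 (pd2 φ) p

lemma isTest_fderiv_apply {φ : ℝ × ℝ → ℝ} (h : IsTest φ) (w : ℝ × ℝ) :
    IsTest (fun p => fderiv ℝ φ p w) := by
  refine ⟨?_, ?_⟩
  · exact (h.1.fderiv_right (m := (⊤ : ℕ∞)) (by simp)).clm_apply contDiff_const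
  · exact h.2.fderiv_apply (𝕜 := ℝ) w

lemma isTest_pd1 {φ : ℝ × ℝ → ℝ} (h : IsTest φ) : IsTest (pd1 φ) := isTest_fderiv_apply h _
lemma isTest_pd2 {φ : ℝ × ℝ → ℝ} (h : IsTest φ) : IsTest (pd2 φ) := isTest_fderiv_apply h _

lemma IsTest.continuous {φ : ℝ × ℝ → ℝ} (h : IsTest φ) : Continuous φ := h.1.continuous

lemma IsTest.differentiable {φ : ℝ × ℝ → ℝ} (h : IsTest φ) : Differentiable ℝ φ :=
  h.1.differentiable (by simp)

lemma IsTest.integrable {φ : ℝ × ℝ → ℝ} (h : IsTest φ) : Integrable φ :=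
  h.continuous.integrable_of_hasCompactSupport h.2

lemma isTest_lap {φ : ℝ × ℝ → ℝ} (h : IsTest φ) : IsTest (lap φ) := by
  have h1 := isTest_pd1 (isTest_pd1 h)
  have h2 := isTest_pd2 (isTest_pd2 h)
  exact ⟨h1.1.add h2.1, h1.2.add h2.2⟩

lemma integrable_mul_test {f φ : ℝ × ℝ → ℝ} (hf : Continuous f) (h : IsTest φ) :
    Integrable (fun p => f p * φ p) :=
  (hf.mul h.continuous).integrable_of_hasCompactSupport h.2.mul_left

lemma ibp {f φ : ℝ × ℝ → ℝ} (hf : ContDiff ℝ 1 f) (h : IsTest φ) (w : ℝ × ℝ) :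
    ∫ p, f p * fderiv ℝ φ p w = - ∫ p, fderiv ℝ f p w * φ p := by
  apply integral_mul_fderiv_eq_neg_fderiv_mul_of_integrable
  · exact integrable_mul_test ((hf.continuous_fderiv (by simp)).clm_apply continuous_const) h
  · exact integrable_mul_test hf.continuous (isTest_fderiv_apply h w)
  · exact integrable_mul_test hf.continuous h
  · exact fun x _ => (hf.differentiable (by simp)) x
  · exact fun x _ => h.differentiable x

lemma pd_comm {φ : ℝ × ℝ → ℝ} (h : IsTest φ) (p : ℝ × ℝ) :
    pd2 (pd1 φ) p = pd1 (pd2 φ) p := by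
  have hs : IsSymmSndFDerivAt ℝ φ p := by
    apply ContDiffAt.isSymmSndFDerivAt h.1.contDiffAt
    simp
    exact WithTop.coe_le_coe.2 le_top
  have hd : DifferentiableAt ℝ (fderiv ℝ φ) p :=
    (h.1.fderiv_right (m := (⊤ : ℕ∞)) (by simp)).differentiable (by simp) p
  have e : ∀ a b : ℝ × ℝ, fderiv ℝ (fun q => fderiv ℝ φ q a) p b
      = fderiv ℝ (fderiv ℝ φ) p b a := by
    intro a b
    rw [fderiv_clm_apply hd (by fun_prop)]
    simp
  unfold pd2 pd1
  change fderiv ℝ (fun q => fderiv ℝ φ q (1, 0)) p (0, 1)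
    = fderiv ℝ (fun q => fderiv ℝ φ q (0, 1)) p (1, 0)
  rw [e, e]
  exact hs _ _

lemma IsTest.contDiff1 {φ : ℝ × ℝ → ℝ} (h : IsTest φ) : ContDiff ℝ 1 φ :=
  h.1.of_le (by exact_mod_cast le_top)

/-- weak identity for `f = ∂₁ u`. -/
lemma weak_id {u φ : ℝ × ℝ → ℝ} (hu : IsTest u) (h : IsTest φ) :
    ∫ p, pd1 u p * lap φ p = - ∫ p, lap u p * pd1 φ p := by
  have h1 := isTest_pd1 h
  have h2 := isTest_pd2 h
  have hu1 := isTest_pd1 hu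
  have hu2 := isTest_pd2 hu
  have a1 : ∫ p, pd1 u p * pd1 (pd1 φ) p = - ∫ p, pd1 (pd1 u) p * pd1 φ p :=
    ibp hu1.contDiff1 h1 _
  have a2 : ∫ p, pd1 u p * pd2 (pd2 φ) p = - ∫ p, pd2 (pd1 u) p * pd2 φ p :=
    ibp hu1.contDiff1 h2 _
  have a3 : ∫ p, pd2 u p * pd1 (pd2 φ) p = - ∫ p, pd1 (pd2 u) p * pd2 φ p :=
    ibp hu2.contDiff1 h2 _
  have a4 : ∫ p, pd2 u p * pd2 (pd1 φ) p = - ∫ p, pd2 (pd2 u) p * pd1 φ p :=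
    ibp hu2.contDiff1 h1 _
  simp only [pd_comm h, pd_comm hu] at a1 a2 a3 a4
  simp only [lap, mul_add, add_mul]
  rw [integral_add, integral_add]
  · linarith
  · exact integrable_mul_test (isTest_pd1 hu1).continuous h1
  · exact integrable_mul_test (isTest_pd2 hu2).continuous h1
  · exact integrable_mul_test hu1.continuous (isTest_pd1 h1)
  · exact integrable_mul_test hu1.continuous (isTest_pd2 h2)

lemma tsupport_fderiv_apply_sub {φ : ℝ × ℝ → ℝ} (w : ℝ × ℝ) :
    tsupport (fun p => fderiv ℝ φ p w) ⊆ tsupport φ := tsupport_fderiv_apply_subset ℝ w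

lemma zero_of_tsupport {φ : ℝ × ℝ → ℝ} {R : ℝ} (h : tsupport φ ⊆ Metric.closedBall 0 R)
    {p : ℝ × ℝ} (hp : R < ‖p‖) : φ p = 0 := by
  by_contra hne
  have := h (subset_tsupport φ hne)
  simp at this
  linarith

/-- shifts of the grid -/
def shf (k : ℕ × ℕ) : ℝ × ℝ := (5 * (k.1 : ℝ), 5 * (k.2 : ℝ))

/-- sum of rescaled copies of `g` over a grid -/
def gr (N : ℕ) (g : ℝ × ℝ → ℝ) (z : ℝ × ℝ) : ℝ :=
  ∑ k ∈ Finset.range N ×ˢ Finset.range N, g ((N : ℝ) • z - shf k)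

lemma shf_sep {k l : ℕ × ℕ} {z : ℝ × ℝ} (hk : ‖z - shf k‖ ≤ 2) (hl : ‖z - shf l‖ ≤ 2) :
    k = l := by
  have e : ∀ m n : ℕ, ∀ x : ℝ, |x - 5 * m| ≤ 2 → |x - 5 * n| ≤ 2 → m = n := by
    intro m n x h1 h2
    rw [abs_le] at h1 h2
    have a1 : (m : ℝ) < n + 1 := by linarith
    have a2 : (n : ℝ) < m + 1 := by linarith
    have b1 : m < n + 1 := by exact_mod_cast a1
    have b2 : n < m + 1 := by exact_mod_cast a2
    omega
  rw [Prod.norm_def] at hk hl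
  have hk1 := (le_max_left _ _).trans hk
  have hk2 := (le_max_right _ _).trans hk
  have hl1 := (le_max_left _ _).trans hl
  have hl2 := (le_max_right _ _).trans hl
  exact Prod.ext (e _ _ z.1 hk1 hl1) (e _ _ z.2 hk2 hl2)

lemma gr_bound {N : ℕ} {g : ℝ × ℝ → ℝ} (hg : tsupport g ⊆ Metric.closedBall 0 2) {S : ℝ}
    (hS : ∀ p, |g p| ≤ S) (z : ℝ × ℝ) : |gr N g z| ≤ S := by
  by_cases h : ∃ k ∈ Finset.range N ×ˢ Finset.range N, g ((N : ℝ) • z - shf k) ≠ 0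
  · obtain ⟨k, hk, hne⟩ := h
    have : gr N g z = g ((N : ℝ) • z - shf k) := by
      refine Finset.sum_eq_single_of_mem k hk ?_
      intro l _ hlk
      by_contra hl
      apply hlk
      refine shf_sep (z := (N : ℝ) • z) ?_ ?_
      · by_contra hc
        exact hl (zero_of_tsupport hg (not_le.1 hc))
      · by_contra hc
        exact hne (zero_of_tsupport hg (not_le.1 hc))
    rw [this]
    exact hS _
  · push Not at h
    have : gr N g z = 0 := Finset.sum_eq_zero h
    rw [this, abs_zero]
    exact (abs_nonneg _).trans (hS 0)

lemma gr_mul {N : ℕ} {f g : ℝ × ℝ → ℝ} (hf : tsupport f ⊆ Metric.closedBall 0 2)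
    (hg : tsupport g ⊆ Metric.closedBall 0 2) (z : ℝ × ℝ) :
    gr N f z * gr N g z = gr N (fun p => f p * g p) z := by
  unfold gr
  rw [Finset.sum_mul_sum]
  refine Finset.sum_congr rfl ?_
  intro k hk
  refine Finset.sum_eq_single_of_mem k hk ?_
  intro l _ hlk
  by_contra hne
  have h1 := left_ne_zero_of_mul hne
  have h2 := right_ne_zero_of_mul hne
  apply hlk
  refine shf_sep (z := (N : ℝ) • z) ?_ ?_
  · by_contra hc
    exact h2 (zero_of_tsupport hg (not_le.1 hc))
  · by_contra hc
    exact h1 (zero_of_tsupport hf (not_le.1 hc))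

lemma fderiv_gr {N : ℕ} {g : ℝ × ℝ → ℝ} (hg : Differentiable ℝ g) (w z : ℝ × ℝ) :
    fderiv ℝ (gr N g) z w = N * gr N (fun p => fderiv ℝ g p w) z := by
  have h : ∀ k : ℕ × ℕ, HasFDerivAt (fun z : ℝ × ℝ => g ((N : ℝ) • z - shf k))
      ((fderiv ℝ g ((N : ℝ) • z - shf k)).comp ((N : ℝ) • ContinuousLinearMap.id ℝ (ℝ × ℝ))) z := by
    intro k
    refine HasFDerivAt.comp z (hg _).hasFDerivAt ?_
    exact ((hasFDerivAt_id z).const_smul (N : ℝ)).sub_const _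
  have h2 := HasFDerivAt.fun_sum (u := Finset.range N ×ˢ Finset.range N) (fun k _ => h k)
  have h3 : fderiv ℝ (gr N g) z = _ := h2.fderiv
  rw [h3]
  simp [gr, Finset.mul_sum]

lemma integral_rescale {N : ℕ} (F : ℝ × ℝ → ℝ) (c : ℝ × ℝ) :
    ∫ z, F ((N : ℝ) • z - c) = ((N : ℝ) ^ 2)⁻¹ * ∫ z, F z := by
  have := Measure.integral_comp_smul (volume : Measure (ℝ × ℝ)) (fun w => F (w - c)) (N : ℝ)
  rw [this, integral_sub_right_eq_self F c]
  simp

lemma integrable_rescale {N : ℕ} (hN : N ≠ 0) {F : ℝ × ℝ → ℝ} (hF : Integrable F) (c : ℝ × ℝ) :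
    Integrable (fun z => F ((N : ℝ) • z - c)) := by
  have := (hF.comp_sub_right c).comp_smul (R := (N : ℝ)) (by exact_mod_cast hN)
  exact this

lemma integral_gr {N : ℕ} (hN : N ≠ 0) {F : ℝ × ℝ → ℝ} (hF : Integrable F) :
    ∫ z, gr N F z = ∫ z, F z := by
  unfold gr
  rw [integral_finsetSum]
  · simp only [integral_rescale]
    simp
    field_simp
  · intro k _
    exact integrable_rescale hN hF _

lemma integrable_gr {N : ℕ} (hN : N ≠ 0) {F : ℝ × ℝ → ℝ} (hF : Integrable F) :
    Integrable (gr N F) := by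
  unfold gr
  apply integrable_finsetSum
  intro k _
  exact integrable_rescale hN hF _

lemma tsupport_gr {N : ℕ} (hN : N ≠ 0) {g : ℝ × ℝ → ℝ} (hg : tsupport g ⊆ Metric.closedBall 0 2) :
    tsupport (gr N g) ⊆ Metric.closedBall 0 7 := by
  apply closure_minimal _ Metric.isClosed_closedBall
  intro z hz
  have hN' : (1 : ℝ) ≤ N := by exact_mod_cast Nat.one_le_iff_ne_zero.2 hN
  have : ∃ k ∈ Finset.range N ×ˢ Finset.range N, g ((N : ℝ) • z - shf k) ≠ 0 := by
    by_contra h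
    push Not at h
    exact hz (Finset.sum_eq_zero h)
  obtain ⟨k, hk, hne⟩ := this
  have h2 : ‖(N : ℝ) • z - shf k‖ ≤ 2 := by
    by_contra hc
    exact hne (zero_of_tsupport hg (not_le.1 hc))
  simp only [Finset.mem_product, Finset.mem_range] at hk
  have k1 : (k.1 : ℝ) ≤ N := by exact_mod_cast hk.1.le
  have k2 : (k.2 : ℝ) ≤ N := by exact_mod_cast hk.2.le
  have hs : ‖shf k‖ ≤ 5 * N := by
    rw [Prod.norm_def]
    apply max_le
    · simp [shf]; linarith
    · simp [shf]; linarith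
  have h3 : ‖(N : ℝ) • z‖ ≤ 2 + 5 * N := by
    calc ‖(N : ℝ) • z‖ = ‖((N : ℝ) • z - shf k) + shf k‖ := by simp
      _ ≤ _ := norm_add_le _ _
      _ ≤ _ := by linarith
  rw [norm_smul] at h3
  simp at h3 ⊢
  by_contra hc
  push Not at hc
  nlinarith

lemma isTest_gr {N : ℕ} (hN : N ≠ 0) {g : ℝ × ℝ → ℝ} (h : IsTest g)
    (hg : tsupport g ⊆ Metric.closedBall 0 2) : IsTest (gr N g) := by
  refine ⟨?_, ?_⟩
  · unfold gr
    apply ContDiff.sum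
    intro k _
    exact h.1.comp (by fun_prop)
  · exact HasCompactSupport.of_support_subset_isCompact (isCompact_closedBall 0 7)
      ((subset_tsupport _).trans (tsupport_gr hN hg))

lemma pd1_const_mul {g : ℝ × ℝ → ℝ} (hg : Differentiable ℝ g) (c : ℝ) :
    pd1 (fun p => c * g p) = fun p => c * pd1 g p := by
  funext p
  simp [pd1, fderiv_const_mul (hg p)]

lemma pd2_const_mul {g : ℝ × ℝ → ℝ} (hg : Differentiable ℝ g) (c : ℝ) :
    pd2 (fun p => c * g p) = fun p => c * pd2 g p := by
  funext p
  simp [pd2, fderiv_const_mul (hg p)]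

lemma lap_const_mul {g : ℝ × ℝ → ℝ} (hg : IsTest g) (c : ℝ) :
    lap (fun p => c * g p) = fun p => c * lap g p := by
  funext p
  simp only [lap, pd1_const_mul hg.differentiable, pd2_const_mul hg.differentiable,
    pd1_const_mul (isTest_pd1 hg).differentiable, pd2_const_mul (isTest_pd2 hg).differentiable]
  ring

lemma isTest_const_mul {g : ℝ × ℝ → ℝ} (hg : IsTest g) (c : ℝ) :
    IsTest (fun p => c * g p) := ⟨contDiff_const.mul hg.1, hg.2.mul_left⟩

lemma pd1_gr {N : ℕ} {g : ℝ × ℝ → ℝ} (hg : Differentiable ℝ g) :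
    pd1 (gr N g) = fun z => N * gr N (pd1 g) z := funext fun z => fderiv_gr hg _ z

lemma pd2_gr {N : ℕ} {g : ℝ × ℝ → ℝ} (hg : Differentiable ℝ g) :
    pd2 (gr N g) = fun z => N * gr N (pd2 g) z := funext fun z => fderiv_gr hg _ z

lemma tsupport_const_mul {g : ℝ × ℝ → ℝ} {s : Set (ℝ × ℝ)} (hg : tsupport g ⊆ s) (c : ℝ) :
    tsupport (fun p => c * g p) ⊆ s := (tsupport_mul_subset_right).trans hg

lemma grid_lemma {u φ : ℝ × ℝ → ℝ} (hu : IsTest u) (hφ : IsTest φ)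
    (su : tsupport u ⊆ Metric.closedBall 0 2) (sφ : tsupport φ ⊆ Metric.closedBall 0 2)
    (bφ : ∀ p, |φ p| ≤ 1) {δ : ℝ} (hδ : 0 < δ) :
    ∃ U Φ : ℝ × ℝ → ℝ, IsTest U ∧ IsTest Φ ∧ tsupport U ⊆ Metric.closedBall 0 7 ∧
      tsupport Φ ⊆ Metric.closedBall 0 7 ∧ (∀ p, |Φ p| ≤ 1) ∧ (∀ p, |pd1 U p| ≤ δ) ∧
      (∫ p, |lap U p| ≤ ∫ p, |lap u p|) ∧
      ∫ p, pd1 U p * pd2 Φ p = ∫ p, pd1 u p * pd2 φ p := by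
  have s1u : tsupport (pd1 u) ⊆ Metric.closedBall 0 2 := (tsupport_fderiv_apply_sub _).trans su
  have s2φ : tsupport (pd2 φ) ⊆ Metric.closedBall 0 2 := (tsupport_fderiv_apply_sub _).trans sφ
  obtain ⟨S, hS⟩ := (isTest_pd1 hu).2.exists_bound_of_continuous (isTest_pd1 hu).continuous
  obtain ⟨N, hN⟩ := exists_nat_gt (max (S / δ) 1)
  have hN1 : (1 : ℝ) < N := (le_max_right _ _).trans_lt hN
  have hNS : S / δ < N := (le_max_left _ _).trans_lt hN
  have hN0 : N ≠ 0 := by rintro rfl; norm_num at hN1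
  have hNp : (0 : ℝ) < N := by linarith
  have tg := isTest_gr hN0 hu su
  have e1 : pd1 (fun p => ((N : ℝ) ^ 2)⁻¹ * gr N u p) = fun p => (N : ℝ)⁻¹ * gr N (pd1 u) p := by
    rw [pd1_const_mul tg.differentiable, pd1_gr hu.differentiable]
    funext p
    field_simp
  have e2 : lap (fun p => ((N : ℝ) ^ 2)⁻¹ * gr N u p) = gr N (lap u) := by
    rw [lap_const_mul tg]
    have t1 := isTest_gr (N := N) hN0 (isTest_pd1 hu) s1u
    have t2 := isTest_gr (N := N) hN0 (isTest_pd2 hu) ((tsupport_fderiv_apply_sub _).trans su)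
    funext p
    unfold lap
    rw [pd1_gr hu.differentiable, pd2_gr hu.differentiable, pd1_const_mul t1.differentiable,
      pd2_const_mul t2.differentiable, pd1_gr (isTest_pd1 hu).differentiable,
      pd2_gr (isTest_pd2 hu).differentiable]
    have : gr N (fun p => pd1 (pd1 u) p + pd2 (pd2 u) p) p
        = gr N (pd1 (pd1 u)) p + gr N (pd2 (pd2 u)) p := by
      simp [gr, Finset.sum_add_distrib]
    change _ = gr N (fun p => pd1 (pd1 u) p + pd2 (pd2 u) p) p
    rw [this]
    field_simp
  refine ⟨fun p => ((N : ℝ) ^ 2)⁻¹ * gr N u p, gr N φ, isTest_const_mul tg _,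
    isTest_gr hN0 hφ sφ, tsupport_const_mul (tsupport_gr hN0 su) _, tsupport_gr hN0 sφ,
    gr_bound sφ bφ, ?_, ?_, ?_⟩
  · intro p
    rw [e1]
    have := gr_bound (N := N) s1u hS p
    simp only [abs_mul, abs_inv, Nat.abs_cast]
    rw [inv_mul_le_iff₀ hNp]
    rw [div_lt_iff₀ hδ] at hNS
    linarith
  · rw [e2]
    have hi := (isTest_lap hu).integrable
    rw [← integral_gr hN0 hi.abs]
    apply integral_mono (integrable_gr hN0 hi).abs (integrable_gr hN0 hi.abs)
    intro p
    exact Finset.abs_sum_le_sum_abs _ _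
  · rw [e1, pd2_gr hφ.differentiable]
    have : ∀ p, (N : ℝ)⁻¹ * gr N (pd1 u) p * (N * gr N (pd2 φ) p)
        = gr N (fun p => pd1 u p * pd2 φ p) p := by
      intro p
      rw [← gr_mul s1u s2φ]
      field_simp
    simp only [this]
    exact integral_gr hN0 (integrable_mul_test (isTest_pd1 hu).continuous (isTest_pd2 hφ))

/-- squared euclidean length -/
def sq2 (p : ℝ × ℝ) : ℝ := p.1 ^ 2 + p.2 ^ 2

lemma sq2_nonneg (p : ℝ × ℝ) : 0 ≤ sq2 p := by unfold sq2; positivity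

lemma hasFDerivAt_sq2 (p : ℝ × ℝ) : HasFDerivAt sq2
    ((2 * p.1) • ContinuousLinearMap.fst ℝ ℝ ℝ + (2 * p.2) • ContinuousLinearMap.snd ℝ ℝ ℝ) p := by
  have h1 := (hasFDerivAt_fst (𝕜 := ℝ) (p := p)).pow 2
  have h2 := (hasFDerivAt_snd (𝕜 := ℝ) (p := p)).pow 2
  have h := h1.add h2
  simp at h
  exact h

lemma hasFDerivAt_radial {g g1 : ℝ → ℝ} (hg : ∀ s, 0 ≤ s → HasDerivAt g (g1 s) s) (p : ℝ × ℝ) :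
    HasFDerivAt (fun p => g (sq2 p)) (g1 (sq2 p) • ((2 * p.1) • ContinuousLinearMap.fst ℝ ℝ ℝ
      + (2 * p.2) • ContinuousLinearMap.snd ℝ ℝ ℝ)) p :=
  (hg _ (sq2_nonneg p)).comp_hasFDerivAt p (hasFDerivAt_sq2 p)

lemma pd1_radial {g g1 : ℝ → ℝ} (hg : ∀ s, 0 ≤ s → HasDerivAt g (g1 s) s) :
    pd1 (fun p => g (sq2 p)) = fun p => 2 * p.1 * g1 (sq2 p) := by
  funext p
  rw [pd1, (hasFDerivAt_radial hg p).fderiv]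
  simp; ring

lemma pd2_radial {g g1 : ℝ → ℝ} (hg : ∀ s, 0 ≤ s → HasDerivAt g (g1 s) s) :
    pd2 (fun p => g (sq2 p)) = fun p => 2 * p.2 * g1 (sq2 p) := by
  funext p
  rw [pd2, (hasFDerivAt_radial hg p).fderiv]
  simp; ring

lemma pd11_radial {g g1 g2 : ℝ → ℝ} (hg : ∀ s, 0 ≤ s → HasDerivAt g (g1 s) s)
    (hg1 : ∀ s, 0 ≤ s → HasDerivAt g1 (g2 s) s) (p : ℝ × ℝ) :
    pd1 (pd1 (fun p => g (sq2 p))) p = 2 * g1 (sq2 p) + 4 * p.1 ^ 2 * g2 (sq2 p) := by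
  rw [pd1_radial hg, pd1]
  have h1 : HasFDerivAt (fun p : ℝ × ℝ => 2 * p.1) ((2 : ℝ) • ContinuousLinearMap.fst ℝ ℝ ℝ) p :=
    (hasFDerivAt_fst (𝕜 := ℝ) (p := p)).const_mul 2
  rw [(h1.fun_mul (hasFDerivAt_radial hg1 p)).fderiv]
  simp; ring

lemma pd21_radial {g g1 g2 : ℝ → ℝ} (hg : ∀ s, 0 ≤ s → HasDerivAt g (g1 s) s)
    (hg1 : ∀ s, 0 ≤ s → HasDerivAt g1 (g2 s) s) (p : ℝ × ℝ) :
    pd2 (pd1 (fun p => g (sq2 p))) p = 4 * p.1 * p.2 * g2 (sq2 p) := by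
  rw [pd1_radial hg, pd2]
  have h1 : HasFDerivAt (fun p : ℝ × ℝ => 2 * p.1) ((2 : ℝ) • ContinuousLinearMap.fst ℝ ℝ ℝ) p :=
    (hasFDerivAt_fst (𝕜 := ℝ) (p := p)).const_mul 2
  rw [(h1.fun_mul (hasFDerivAt_radial hg1 p)).fderiv]
  simp; ring

lemma pd22_radial {g g1 g2 : ℝ → ℝ} (hg : ∀ s, 0 ≤ s → HasDerivAt g (g1 s) s)
    (hg1 : ∀ s, 0 ≤ s → HasDerivAt g1 (g2 s) s) (p : ℝ × ℝ) :
    pd2 (pd2 (fun p => g (sq2 p))) p = 2 * g1 (sq2 p) + 4 * p.2 ^ 2 * g2 (sq2 p) := by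
  rw [pd2_radial hg, pd2]
  have h1 : HasFDerivAt (fun p : ℝ × ℝ => 2 * p.2) ((2 : ℝ) • ContinuousLinearMap.snd ℝ ℝ ℝ) p :=
    (hasFDerivAt_snd (𝕜 := ℝ) (p := p)).const_mul 2
  rw [(h1.fun_mul (hasFDerivAt_radial hg1 p)).fderiv]
  simp; ring

/-- smooth cutoff: `1` for `s ≤ 1`, `0` for `s ≥ 4` -/
def chi (s : ℝ) : ℝ := Real.smoothTransition ((4 - s) / 3)

lemma chi_smooth : ContDiff ℝ (⊤ : ℕ∞) chi := by
  unfold chi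
  exact Real.smoothTransition.contDiff.comp (by fun_prop)

lemma chi_one {s : ℝ} (h : s ≤ 1) : chi s = 1 :=
  Real.smoothTransition.one_of_one_le (by linarith)

lemma chi_zero {s : ℝ} (h : 4 ≤ s) : chi s = 0 :=
  Real.smoothTransition.zero_of_nonpos (by linarith)

lemma chi_nonneg (s : ℝ) : 0 ≤ chi s := Real.smoothTransition.nonneg _
lemma chi_le_one (s : ℝ) : chi s ≤ 1 := Real.smoothTransition.le_one _

def chi1 : ℝ → ℝ := deriv chi
def chi2 : ℝ → ℝ := deriv chi1

lemma chi1_smooth : ContDiff ℝ (⊤ : ℕ∞) chi1 :=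
  chi_smooth.iterate_deriv 1

lemma chi2_smooth : ContDiff ℝ (⊤ : ℕ∞) chi2 :=
  chi_smooth.iterate_deriv 2

lemma chi_hasDeriv (s : ℝ) : HasDerivAt chi (chi1 s) s :=
  (chi_smooth.differentiable (by simp) s).hasDerivAt

lemma chi1_hasDeriv (s : ℝ) : HasDerivAt chi1 (chi2 s) s :=
  (chi1_smooth.differentiable (by simp) s).hasDerivAt

lemma chi1_lo {s : ℝ} (h : s < 1) : chi1 s = 0 := by
  have : chi =ᶠ[nhds s] fun _ => 1 := by
    filter_upwards [Iio_mem_nhds h] with t ht using chi_one ht.le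
  rw [chi1, this.deriv_eq]; simp

lemma chi1_hi {s : ℝ} (h : 4 < s) : chi1 s = 0 := by
  have : chi =ᶠ[nhds s] fun _ => 0 := by
    filter_upwards [Ioi_mem_nhds h] with t ht using chi_zero ht.le
  rw [chi1, this.deriv_eq]; simp

lemma chi2_lo {s : ℝ} (h : s < 1) : chi2 s = 0 := by
  have : chi1 =ᶠ[nhds s] fun _ => 0 := by
    filter_upwards [Iio_mem_nhds h] with t ht using chi1_lo ht
  rw [chi2, this.deriv_eq]; simp

lemma chi2_hi {s : ℝ} (h : 4 < s) : chi2 s = 0 := by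
  have : chi1 =ᶠ[nhds s] fun _ => 0 := by
    filter_upwards [Ioi_mem_nhds h] with t ht using chi1_hi ht
  rw [chi2, this.deriv_eq]; simp

lemma chi_bound : ∃ M : ℝ, 0 ≤ M ∧ ∀ s, |chi1 s| ≤ M ∧ |chi2 s| ≤ M := by
  obtain ⟨A, hA⟩ := (isCompact_Icc (a := (1 : ℝ)) (b := 4)).exists_bound_of_continuousOn
    chi1_smooth.continuous.continuousOn
  obtain ⟨B, hB⟩ := (isCompact_Icc (a := (1 : ℝ)) (b := 4)).exists_bound_of_continuousOn
    chi2_smooth.continuous.continuousOn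
  have hA0 : 0 ≤ A := (norm_nonneg _).trans (hA 2 (by norm_num))
  have hB0 : 0 ≤ B := (norm_nonneg _).trans (hB 2 (by norm_num))
  refine ⟨A + B, by positivity, fun s => ?_⟩
  rcases lt_or_ge s 1 with h | h
  · rw [chi1_lo h, chi2_lo h]; simp; positivity
  rcases lt_or_ge 4 s with h' | h'
  · rw [chi1_hi h', chi2_hi h']; simp; positivity
  have a := hA s ⟨h, h'⟩
  have b := hB s ⟨h, h'⟩
  rw [Real.norm_eq_abs] at a b
  exact ⟨by linarith, by linarith⟩

def hh (ε s : ℝ) : ℝ := chi s * Real.log (s + ε)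
def hh1 (ε s : ℝ) : ℝ := chi1 s * Real.log (s + ε) + chi s * (s + ε)⁻¹
def hh2 (ε s : ℝ) : ℝ :=
  chi2 s * Real.log (s + ε) + 2 * chi1 s * (s + ε)⁻¹ - chi s * ((s + ε)⁻¹) ^ 2

lemma hh_hasDeriv {ε : ℝ} (hε : 0 < ε) {s : ℝ} (hs : 0 ≤ s) : HasDerivAt (hh ε) (hh1 ε s) s := by
  have h0 : s + ε ≠ 0 := by positivity
  have h1 : HasDerivAt (fun s => Real.log (s + ε)) ((s + ε)⁻¹) s := by
    have := ((hasDerivAt_id s).add_const ε).log h0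
    simpa using this
  exact (chi_hasDeriv s).mul h1

lemma hh1_hasDeriv {ε : ℝ} (hε : 0 < ε) {s : ℝ} (hs : 0 ≤ s) :
    HasDerivAt (hh1 ε) (hh2 ε s) s := by
  have h0 : s + ε ≠ 0 := by positivity
  have h1 : HasDerivAt (fun s => Real.log (s + ε)) ((s + ε)⁻¹) s := by
    have := ((hasDerivAt_id s).add_const ε).log h0
    simpa using this
  have h2 : HasDerivAt (fun s => (s + ε)⁻¹) (- ((s + ε)⁻¹) ^ 2) s := by
    have := ((hasDerivAt_id s).add_const ε).inv h0
    refine this.congr_deriv ?_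
    simp only [id]; field_simp
  have := ((chi1_hasDeriv s).mul h1).add ((chi_hasDeriv s).mul h2)
  refine this.congr_deriv ?_
  unfold hh2; ring

lemma lap_bound : ∃ C : ℝ, 0 ≤ C ∧ ∀ ε s : ℝ, 0 < ε → ε ≤ 1 → 0 ≤ s →
    |4 * hh1 ε s + 4 * s * hh2 ε s| ≤ 4 * (ε / (s + ε) ^ 2) + (if s ≤ 4 then C else 0) := by
  obtain ⟨M, hM, hb⟩ := chi_bound
  refine ⟨4 * ((M + 4 * M) * 4 + 2 * M), by positivity, fun ε s hε hε1 hs => ?_⟩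
  have h0 : 0 < s + ε := by positivity
  have e : 4 * hh1 ε s + 4 * s * hh2 ε s = 4 * (chi s * (ε / (s + ε) ^ 2))
      + 4 * ((chi1 s + s * chi2 s) * Real.log (s + ε) + 2 * chi1 s * (s / (s + ε))) := by
    unfold hh1 hh2
    field_simp
    ring
  have hq : 0 ≤ ε / (s + ε) ^ 2 := by positivity
  have h1 : |4 * (chi s * (ε / (s + ε) ^ 2))| ≤ 4 * (ε / (s + ε) ^ 2) := by
    rw [abs_of_nonneg (by have := chi_nonneg s; positivity)]
    have := mul_le_mul_of_nonneg_right (chi_le_one s) hq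
    linarith
  rw [e]
  refine (abs_add_le _ _).trans (add_le_add h1 ?_)
  split_ifs with h4
  · rw [abs_mul, abs_of_nonneg (by norm_num : (0 : ℝ) ≤ 4)]
    refine mul_le_mul_of_nonneg_left ?_ (by norm_num)
    rcases lt_or_ge s 1 with hs1 | hs1
    · rw [chi1_lo hs1, chi2_lo hs1]; simp; positivity
    have hl0 : 0 ≤ Real.log (s + ε) := Real.log_nonneg (by linarith)
    have hl : Real.log (s + ε) ≤ 4 := by
      have := Real.log_le_sub_one_of_pos h0
      linarith
    have hr : s / (s + ε) ≤ 1 := by rw [div_le_one h0]; linarith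
    have hr0 : 0 ≤ s / (s + ε) := by positivity
    refine (abs_add_le _ _).trans (add_le_add ?_ ?_)
    · rw [abs_mul, abs_of_nonneg hl0]
      refine mul_le_mul ?_ hl hl0 (by positivity)
      refine (abs_add_le _ _).trans (add_le_add (hb s).1 ?_)
      rw [abs_mul, abs_of_nonneg hs]
      exact mul_le_mul h4 (hb s).2 (abs_nonneg _) (by norm_num)
    · rw [abs_mul, abs_of_nonneg hr0, abs_mul, abs_of_nonneg (by norm_num : (0 : ℝ) ≤ 2)]
      have := mul_le_mul (hb s).1 hr hr0 hM
      nlinarith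
  · push Not at h4
    rw [chi1_hi h4, chi2_hi h4]; simp

def uu (ε : ℝ) (p : ℝ × ℝ) : ℝ := hh ε (sq2 p)
def ff (ε : ℝ) (p : ℝ × ℝ) : ℝ := p.1 * p.2 * (sq2 p + ε)⁻¹ * chi (4 * sq2 p)

lemma sq2_smooth : ContDiff ℝ (⊤ : ℕ∞) sq2 := by
  unfold sq2; fun_prop

lemma norm_sq_le_sq2 (p : ℝ × ℝ) : ‖p‖ ^ 2 ≤ sq2 p := by
  rw [Prod.norm_def, Real.norm_eq_abs, Real.norm_eq_abs]
  unfold sq2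
  rcases max_cases |p.1| |p.2| with ⟨h, _⟩ | ⟨h, _⟩ <;> rw [h, sq_abs] <;> nlinarith [sq_nonneg p.1, sq_nonneg p.2]

lemma supp_of_sq2 {g : ℝ × ℝ → ℝ} (h : ∀ p, 4 ≤ sq2 p → g p = 0) :
    tsupport g ⊆ Metric.closedBall 0 2 := by
  apply closure_minimal _ Metric.isClosed_closedBall
  intro p hp
  by_contra hc
  simp at hc
  apply hp
  apply h
  have := norm_sq_le_sq2 p
  nlinarith

lemma supp_uu (ε : ℝ) : tsupport (uu ε) ⊆ Metric.closedBall 0 2 :=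
  supp_of_sq2 fun p hp => by simp [uu, hh, chi_zero hp]

lemma supp_ff (ε : ℝ) : tsupport (ff ε) ⊆ Metric.closedBall 0 2 :=
  supp_of_sq2 fun p hp => by
    have : chi (4 * sq2 p) = 0 := chi_zero (by linarith)
    simp [ff, this]

lemma compact_of_tsupport {g : ℝ × ℝ → ℝ} {R : ℝ} (h : tsupport g ⊆ Metric.closedBall 0 R) :
    HasCompactSupport g :=
  HasCompactSupport.of_support_subset_isCompact (isCompact_closedBall 0 R)
      ((subset_tsupport _).trans h)

lemma isTest_uu {ε : ℝ} (hε : 0 < ε) : IsTest (uu ε) := by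
  refine ⟨?_, compact_of_tsupport (supp_uu ε)⟩
  unfold uu hh
  refine (chi_smooth.comp sq2_smooth).mul ((sq2_smooth.add contDiff_const).log ?_)
  intro p
  have := sq2_nonneg p
  positivity

lemma isTest_ff {ε : ℝ} (hε : 0 < ε) : IsTest (ff ε) := by
  refine ⟨?_, compact_of_tsupport (supp_ff ε)⟩
  unfold ff
  refine ContDiff.mul (ContDiff.mul (by fun_prop) ((sq2_smooth.add contDiff_const).inv ?_))
    (chi_smooth.comp (contDiff_const.mul sq2_smooth))
  intro p
  have := sq2_nonneg p
  positivity

lemma ff_le {ε : ℝ} (hε : 0 < ε) (p : ℝ × ℝ) : |ff ε p| ≤ 1 := by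
  have h0 : 0 < sq2 p + ε := by have := sq2_nonneg p; positivity
  unfold ff
  rw [abs_mul, abs_of_nonneg (chi_nonneg _)]
  have : |p.1 * p.2 * (sq2 p + ε)⁻¹| ≤ 1 := by
    rw [abs_mul, abs_inv, abs_of_pos h0, ← div_eq_mul_inv, div_le_one h0, abs_le]
    unfold sq2
    constructor <;> nlinarith [sq_nonneg (p.1 + p.2), sq_nonneg (p.1 - p.2)]
  exact mul_le_one₀ this (chi_nonneg _) (chi_le_one _)

lemma lap_uu {ε : ℝ} (hε : 0 < ε) (p : ℝ × ℝ) :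
    lap (uu ε) p = 4 * hh1 ε (sq2 p) + 4 * sq2 p * hh2 ε (sq2 p) := by
  unfold lap uu
  rw [pd11_radial (fun s hs => hh_hasDeriv hε hs) (fun s hs => hh1_hasDeriv hε hs),
    pd22_radial (fun s hs => hh_hasDeriv hε hs) (fun s hs => hh1_hasDeriv hε hs)]
  unfold sq2; ring

lemma integrable_kernel : Integrable (fun p : ℝ × ℝ => 1 / (sq2 p + 1) ^ 2) := by
  have h := (integrable_inv_one_add_sq).mul_prod (integrable_inv_one_add_sq)
  refine h.mono' ?_ ?_
  · have : Continuous (fun p : ℝ × ℝ => 1 / (sq2 p + 1) ^ 2) := by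
      refine continuous_const.div ((sq2_smooth.continuous.add continuous_const).pow 2) ?_
      intro p
      have := sq2_nonneg p
      positivity
    exact this.aestronglyMeasurable
  · refine Filter.Eventually.of_forall fun p => ?_
    rw [Real.norm_eq_abs, abs_of_nonneg (by positivity), ← mul_inv, one_div]
    apply inv_anti₀ (by positivity)
    unfold sq2
    nlinarith [sq_nonneg p.1, sq_nonneg p.2, mul_nonneg (sq_nonneg p.1) (sq_nonneg p.2)]

lemma kernel_eq {η : ℝ} (hη : 0 < η) (p : ℝ × ℝ) :
    η ^ 2 / (sq2 p + η ^ 2) ^ 2 = (η ^ 2)⁻¹ * (1 / (sq2 (η⁻¹ • p) + 1) ^ 2) := by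
  have h0 : sq2 p + η ^ 2 ≠ 0 := by have := sq2_nonneg p; positivity
  have : sq2 (η⁻¹ • p) + 1 = (sq2 p + η ^ 2) * (η ^ 2)⁻¹ := by
    unfold sq2; simp; field_simp
  rw [this]
  field_simp

lemma integrable_kernel' {η : ℝ} (hη : 0 < η) :
    Integrable (fun p : ℝ × ℝ => η ^ 2 / (sq2 p + η ^ 2) ^ 2) := by
  simp only [kernel_eq hη]
  exact (integrable_kernel.comp_smul (inv_ne_zero hη.ne')).const_mul _

lemma integral_kernel {η : ℝ} (hη : 0 < η) :
    ∫ p : ℝ × ℝ, η ^ 2 / (sq2 p + η ^ 2) ^ 2 = ∫ p : ℝ × ℝ, 1 / (sq2 p + 1) ^ 2 := by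
  simp only [kernel_eq hη]
  rw [integral_const_mul, Measure.integral_comp_inv_smul volume (fun p => 1 / (sq2 p + 1) ^ 2) η]
  simp
  field_simp

lemma lap_uu_L1 : ∃ C : ℝ, 0 < C ∧ ∀ η : ℝ, 0 < η → η ≤ 1 → ∫ p, |lap (uu (η ^ 2)) p| ≤ C := by
  obtain ⟨C, hC, hb⟩ := lap_bound
  have hi0 : Integrable (fun p : ℝ × ℝ => if sq2 p ≤ 4 then C else 0) := by
    have hm : MeasurableSet {p : ℝ × ℝ | sq2 p ≤ 4} :=
      (isClosed_le sq2_smooth.continuous continuous_const).measurableSet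
    have hsub : {p : ℝ × ℝ | sq2 p ≤ 4} ⊆ Metric.closedBall 0 2 := by
      intro p hp
      simp at hp ⊢
      have := norm_sq_le_sq2 p
      nlinarith [norm_nonneg p]
    have hf : (volume : Measure (ℝ × ℝ)) {p : ℝ × ℝ | sq2 p ≤ 4} ≠ ⊤ :=
      ((measure_mono hsub).trans_lt (isCompact_closedBall 0 2).measure_lt_top).ne
    have := (integrableOn_const (μ := (volume : Measure (ℝ × ℝ))) (C := C) hf)
    rw [← integrable_indicator_iff hm] at this
    refine this.congr (Filter.Eventually.of_forall fun p => ?_)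
    simp [Set.indicator]
  have hA : 0 ≤ ∫ p : ℝ × ℝ, 1 / (sq2 p + 1) ^ 2 := integral_nonneg fun p => by positivity
  have hB : 0 ≤ ∫ p : ℝ × ℝ, (if sq2 p ≤ 4 then C else 0) := integral_nonneg fun p => by
    dsimp only
    split_ifs <;> simp [hC]
  refine ⟨4 * (∫ p : ℝ × ℝ, 1 / (sq2 p + 1) ^ 2) + (∫ p : ℝ × ℝ, if sq2 p ≤ 4 then C else 0) + 1,
    by positivity, fun η hη hη1 => ?_⟩
  have hε : 0 < η ^ 2 := by positivity
  have hε1 : η ^ 2 ≤ 1 := by nlinarith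
  have := integral_mono (isTest_lap (isTest_uu hε)).integrable.abs
    (((integrable_kernel' hη).const_mul 4).add hi0) (fun p => by
      rw [lap_uu hε]
      exact hb (η ^ 2) (sq2 p) hε hε1 (sq2_nonneg p))
  refine this.trans ?_
  simp only [Pi.add_apply]
  rw [integral_add ((integrable_kernel' hη).const_mul 4) hi0, integral_const_mul,
    integral_kernel hη]
  linarith

/-- dyadic boxes -/
def bx (l : ℕ) : Set (ℝ × ℝ) :=
  Set.Ioc ((1 / 2 : ℝ) ^ (l + 3)) ((1 / 2 : ℝ) ^ (l + 2)) ×ˢ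
    Set.Ioc ((1 / 2 : ℝ) ^ (l + 3)) ((1 / 2 : ℝ) ^ (l + 2))

lemma bx_meas (l : ℕ) : MeasurableSet (bx l) := measurableSet_Ioc.prod measurableSet_Ioc

lemma bx_disj {l m : ℕ} (h : l < m) : Disjoint (bx l) (bx m) := by
  rw [Set.disjoint_left]
  intro p hp hq
  have h1 := hp.1.1
  have h2 := hq.1.2
  have : (1 / 2 : ℝ) ^ (m + 2) ≤ (1 / 2 : ℝ) ^ (l + 3) :=
    pow_le_pow_of_le_one (by norm_num) (by norm_num) (by omega)
  linarith

lemma bx_vol (l : ℕ) : (volume : Measure (ℝ × ℝ)).real (bx l) = ((1 / 2 : ℝ) ^ (l + 3)) ^ 2 := by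
  unfold bx
  have e : (1 / 2 : ℝ) ^ (l + 2) - (1 / 2 : ℝ) ^ (l + 3) = (1 / 2 : ℝ) ^ (l + 3) := by ring
  rw [Measure.volume_eq_prod, measureReal_prod_prod, Real.volume_real_Ioc_of_le, e]
  · ring
  · exact pow_le_pow_of_le_one (by norm_num) (by norm_num) (by omega)

lemma main_integral {n : ℕ} {ε : ℝ} (hε : 0 < ε) (hεn : ε ≤ ((1 / 2 : ℝ) ^ (n + 3)) ^ 2) :
    (n : ℝ) / 1000 ≤ ∫ p, pd1 (uu ε) p * pd2 (ff ε) p := by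
  have tu := isTest_uu hε
  have tf := isTest_ff hε
  have e1 : ∫ p, pd1 (uu ε) p * pd2 (ff ε) p = - ∫ p, pd2 (pd1 (uu ε)) p * ff ε p :=
    ibp (isTest_pd1 tu).contDiff1 tf _
  have e2 : ∀ p, -(pd2 (pd1 (uu ε)) p * ff ε p) =
      4 * (p.1 * p.2) ^ 2 * ((sq2 p + ε)⁻¹) ^ 3 * chi (4 * sq2 p) := by
    intro p
    have : pd2 (pd1 (uu ε)) p = 4 * p.1 * p.2 * hh2 ε (sq2 p) :=
      pd21_radial (fun s hs => hh_hasDeriv hε hs) (fun s hs => hh1_hasDeriv hε hs) p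
    rw [this]
    rcases lt_or_ge (sq2 p) 1 with h | h
    · simp only [hh2, chi1_lo h, chi2_lo h, chi_one h.le, ff]
      ring
    · have : chi (4 * sq2 p) = 0 := chi_zero (by linarith)
      simp [ff, this]
  have hi : Integrable (fun p => 4 * (p.1 * p.2) ^ 2 * ((sq2 p + ε)⁻¹) ^ 3 * chi (4 * sq2 p)) := by
    simp only [← e2]
    exact (integrable_mul_test (isTest_pd2 (isTest_pd1 tu)).continuous tf).neg
  have hnn : ∀ p : ℝ × ℝ, 0 ≤ 4 * (p.1 * p.2) ^ 2 * ((sq2 p + ε)⁻¹) ^ 3 * chi (4 * sq2 p) := by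
    intro p
    have := sq2_nonneg p
    have := chi_nonneg (4 * sq2 p)
    positivity
  rw [e1, ← integral_neg]
  simp only [e2]
  have hbox : ∀ l ∈ Finset.range n, (1 : ℝ) / 1000 ≤
      ∫ p in bx l, 4 * (p.1 * p.2) ^ 2 * ((sq2 p + ε)⁻¹) ^ 3 * chi (4 * sq2 p) := by
    intro l hl
    rw [Finset.mem_range] at hl
    set t : ℝ := (1 / 2 : ℝ) ^ (l + 3) with ht
    have ht0 : 0 < t := by positivity
    have ht2 : (1 / 2 : ℝ) ^ (l + 2) = 2 * t := by rw [ht]; ring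
    have ht8 : t ≤ 1 / 8 := by
      rw [ht]
      calc (1 / 2 : ℝ) ^ (l + 3) ≤ (1 / 2 : ℝ) ^ 3 :=
            pow_le_pow_of_le_one (by norm_num) (by norm_num) (by omega)
        _ = 1 / 8 := by norm_num
    have hεt : ε ≤ t ^ 2 := by
      refine hεn.trans ?_
      have : (1 / 2 : ℝ) ^ (n + 3) ≤ t :=
        pow_le_pow_of_le_one (by norm_num) (by norm_num) (by omega)
      exact pow_le_pow_left₀ (by positivity) this 2
    have hfin : (volume : Measure (ℝ × ℝ)) (bx l) ≠ ⊤ := by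
      unfold bx
      rw [Measure.volume_eq_prod, Measure.prod_prod]
      simp [ENNReal.mul_eq_top]
    have := setIntegral_ge_of_const_le_real (c := 4 * (t * t) ^ 2 * ((9 * t ^ 2)⁻¹) ^ 3)
      (bx_meas l) hfin (f := fun p => 4 * (p.1 * p.2) ^ 2 * ((sq2 p + ε)⁻¹) ^ 3 * chi (4 * sq2 p))
      (by
        rintro p ⟨⟨a1, a2⟩, ⟨b1, b2⟩⟩
        rw [ht2] at a2 b2
        rw [← ht] at a1 b1
        have x0 : 0 < p.1 := by linarith
        have y0 : 0 < p.2 := by linarith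
        have hs : sq2 p ≤ 8 * t ^ 2 := by unfold sq2; nlinarith
        have hc : chi (4 * sq2 p) = 1 := chi_one (by nlinarith)
        rw [hc, mul_one]
        have hsn := sq2_nonneg p
        gcongr
        linarith) hi.integrableOn
    refine le_trans ?_ this
    rw [bx_vol, ← ht]
    have : 4 * (t * t) ^ 2 * ((9 * t ^ 2)⁻¹) ^ 3 * t ^ 2 = 4 / 729 := by
      field_simp; norm_num
    rw [this]; norm_num
  have hun := integral_biUnion_finset (μ := (volume : Measure (ℝ × ℝ))) (Finset.range n)
    (s := bx) (f := fun p => 4 * (p.1 * p.2) ^ 2 * ((sq2 p + ε)⁻¹) ^ 3 * chi (4 * sq2 p))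
    (fun i _ => bx_meas i) (by
      intro i _ j _ hij
      rcases lt_or_gt_of_ne hij with h | h
      · exact bx_disj h
      · exact (bx_disj h).symm) (fun i _ => hi.integrableOn)
  have hle := setIntegral_le_integral (s := ⋃ i ∈ Finset.range n, bx i) hi
    (Filter.Eventually.of_forall hnn)
  refine le_trans ?_ hle
  rw [hun]
  have := Finset.sum_le_sum hbox
  simp at this
  simp
  linarith

lemma core_lemma : ∃ C : ℝ, 0 < C ∧ ∀ M : ℝ, ∃ u φ : ℝ × ℝ → ℝ, IsTest u ∧ IsTest φ ∧
    tsupport u ⊆ Metric.closedBall 0 2 ∧ tsupport φ ⊆ Metric.closedBall 0 2 ∧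
    (∀ p, |φ p| ≤ 1) ∧ (∫ p, |lap u p| ≤ C) ∧ M ≤ ∫ p, pd1 u p * pd2 φ p := by
  obtain ⟨C, hC, h⟩ := lap_uu_L1
  refine ⟨C, hC, fun M => ?_⟩
  obtain ⟨n, hn⟩ := exists_nat_gt (M * 1000)
  set η : ℝ := (1 / 2 : ℝ) ^ (n + 3) with hη
  have hη0 : 0 < η := by positivity
  have hη1 : η ≤ 1 := pow_le_one₀ (by norm_num) (by norm_num)
  have hε : 0 < η ^ 2 := by positivity
  refine ⟨uu (η ^ 2), ff (η ^ 2), isTest_uu hε, isTest_ff hε, supp_uu _, supp_ff _, ff_le hε,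
    h η hη0 hη1, ?_⟩
  refine le_trans ?_ (main_integral hε le_rfl)
  linarith

lemma block_lemma (n : ℕ) : ∃ U Φ : ℝ × ℝ → ℝ, IsTest U ∧ IsTest Φ ∧
    tsupport U ⊆ Metric.closedBall 0 7 ∧
    tsupport Φ ⊆ Metric.closedBall 0 7 ∧ (∀ p, |Φ p| ≤ 1) ∧ (∀ p, |pd1 U p| ≤ (1 / 2) ^ n) ∧
    (∫ p, |lap U p| ≤ (1 / 2) ^ n) ∧ (n : ℝ) ≤ ∫ p, pd1 U p * pd2 Φ p := by
  obtain ⟨C, hC, h⟩ := core_lemma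
  obtain ⟨u, φ, tu, tφ, su, sφ, bφ, lu, hM⟩ := h (n * 2 ^ n * C)
  obtain ⟨U, Φ, tU, tΦ, sU, sΦ, bΦ, bU, lU, hI⟩ := grid_lemma tu tφ su sφ bφ hC
  have ht : 0 < (1 / 2 : ℝ) ^ n / C := by positivity
  refine ⟨fun p => ((1 / 2 : ℝ) ^ n / C) * U p, Φ, isTest_const_mul tU _, tΦ,
    tsupport_const_mul sU _, sΦ, bΦ, ?_, ?_, ?_⟩
  · intro p
    rw [pd1_const_mul tU.differentiable, abs_mul, abs_of_pos ht, div_mul_eq_mul_div,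
      div_le_iff₀ hC]
    exact mul_le_mul_of_nonneg_left (bU p) (by positivity)
  · rw [lap_const_mul tU]
    simp only [abs_mul, abs_of_pos ht]
    rw [integral_const_mul, div_mul_eq_mul_div, div_le_iff₀ hC]
    exact mul_le_mul_of_nonneg_left (lU.trans lu) (by positivity)
  · rw [pd1_const_mul tU.differentiable]
    simp only [mul_assoc]
    rw [integral_const_mul, hI]
    calc (n : ℝ) = ((1 / 2 : ℝ) ^ n / C) * (n * 2 ^ n * C) := by
          rw [one_div, inv_pow]; field_simp
      _ ≤ _ := mul_le_mul_of_nonneg_left hM ht.le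

def fser (U : ℕ → ℝ × ℝ → ℝ) (b : ℕ → ℝ) (p : ℝ × ℝ) : ℝ := ∑' n, b n * pd1 (U n) p
def Fser (U : ℕ → ℝ × ℝ → ℝ) (b : ℕ → ℝ) (p : ℝ × ℝ) : ℝ := ∑' n, b n * lap (U n) p

lemma summable_half (K : ℝ) : Summable (fun n : ℕ => K * (1 / 2 : ℝ) ^ n) :=
  summable_geometric_two.mul_left K

lemma term_bound {U : ℕ → ℝ × ℝ → ℝ} {b : ℕ → ℝ} {K : ℝ}
    (bU : ∀ n p, |pd1 (U n) p| ≤ (1 / 2) ^ n)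
    (hb : ∀ n, |b n| ≤ K)
    (n : ℕ) (p : ℝ × ℝ) : ‖b n * pd1 (U n) p‖ ≤ K * (1 / 2 : ℝ) ^ n := by
  rw [Real.norm_eq_abs, abs_mul]
  exact mul_le_mul (hb n) (bU n p) (abs_nonneg _) ((abs_nonneg _).trans (hb n))

lemma fser_summable {U : ℕ → ℝ × ℝ → ℝ} {b : ℕ → ℝ} {K : ℝ}
    (bU : ∀ n p, |pd1 (U n) p| ≤ (1 / 2) ^ n)
    (hb : ∀ n, |b n| ≤ K)
    (p : ℝ × ℝ) : Summable (fun n => b n * pd1 (U n) p) :=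
  Summable.of_norm_bounded (summable_half K) fun n => term_bound bU hb n p

lemma fser_bound {U : ℕ → ℝ × ℝ → ℝ} {b : ℕ → ℝ} {K : ℝ}
    (bU : ∀ n p, |pd1 (U n) p| ≤ (1 / 2) ^ n)
    (hb : ∀ n, |b n| ≤ K)
    (p : ℝ × ℝ) : |fser U b p| ≤ K * 2 := by
  have h : HasSum (fun n : ℕ => K * (1 / 2 : ℝ) ^ n) (K * 2) := hasSum_geometric_two.mul_left K
  exact tsum_of_norm_bounded h fun n => term_bound bU hb n p

lemma fser_continuous {U : ℕ → ℝ × ℝ → ℝ} {b : ℕ → ℝ} {K : ℝ}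
    (hU : ∀ n, IsTest (U n))
    (bU : ∀ n p, |pd1 (U n) p| ≤ (1 / 2) ^ n)
    (hb : ∀ n, |b n| ≤ K)
    : Continuous (fser U b) :=
  continuous_tsum (fun n => continuous_const.mul (isTest_pd1 (hU n)).continuous)
    (summable_half K) fun n p => term_bound bU hb n p

lemma fser_zero {U : ℕ → ℝ × ℝ → ℝ} {b : ℕ → ℝ}
    (sU : ∀ n, tsupport (U n) ⊆ Metric.closedBall 0 7)
    {p : ℝ × ℝ} (hp : 7 < ‖p‖) : fser U b p = 0 := by
  unfold fser
  have : ∀ n, pd1 (U n) p = 0 := fun n =>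
    zero_of_tsupport ((tsupport_fderiv_apply_sub _).trans (sU n)) hp
  simp [this]

lemma Fser_zero {U : ℕ → ℝ × ℝ → ℝ} {b : ℕ → ℝ}
    (sU : ∀ n, tsupport (U n) ⊆ Metric.closedBall 0 7)
    {p : ℝ × ℝ} (hp : 7 < ‖p‖) : Fser U b p = 0 := by
  unfold Fser
  have h1 : ∀ n, pd1 (pd1 (U n)) p = 0 := fun n =>
    zero_of_tsupport (((tsupport_fderiv_apply_sub _).trans (tsupport_fderiv_apply_sub _)).trans
      (sU n)) hp
  have h2 : ∀ n, pd2 (pd2 (U n)) p = 0 := fun n =>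
    zero_of_tsupport (((tsupport_fderiv_apply_sub _).trans (tsupport_fderiv_apply_sub _)).trans
      (sU n)) hp
  simp [lap, h1, h2]

lemma Fser_measurable {U : ℕ → ℝ × ℝ → ℝ} {b : ℕ → ℝ}
    (hU : ∀ n, IsTest (U n))
    : Measurable (Fser U b) := by
  unfold Fser
  exact Measurable.tsum fun n => measurable_const.mul (isTest_lap (hU n)).continuous.measurable

lemma Fser_integrable {U : ℕ → ℝ × ℝ → ℝ} {b : ℕ → ℝ} {K : ℝ}
    (hU : ∀ n, IsTest (U n))
    (lU : ∀ n, ∫ p, |lap (U n) p| ≤ (1 / 2) ^ n)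
    (hb : ∀ n, |b n| ≤ K)
    : Integrable (Fser U b) := by
  have hK : 0 ≤ K := (abs_nonneg _).trans (hb 0)
  refine ⟨(Fser_measurable hU).aestronglyMeasurable, ?_⟩
  have hitg : ∀ n, Integrable (fun p => b n * lap (U n) p) := fun n =>
    (isTest_lap (hU n)).integrable.const_mul _
  have h1 : ∫⁻ p, ‖Fser U b p‖ₑ ≤ ∫⁻ p, ∑' n, ‖b n * lap (U n) p‖ₑ := by
    refine lintegral_mono fun p => ?_
    exact enorm_tsum_le_tsum_enorm
  refine lt_of_le_of_lt h1 ?_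
  rw [lintegral_tsum fun n => (hitg n).1.enorm]
  have h2 : ∀ n, ∫⁻ p, ‖b n * lap (U n) p‖ₑ ≤ ENNReal.ofReal (K * (1 / 2 : ℝ) ^ n) := by
    intro n
    rw [← ofReal_integral_norm_eq_lintegral_enorm (hitg n)]
    apply ENNReal.ofReal_le_ofReal
    simp only [Real.norm_eq_abs, abs_mul]
    rw [integral_const_mul]
    exact mul_le_mul (hb n) (lU n) (integral_nonneg fun _ => abs_nonneg _) hK
  refine lt_of_le_of_lt (ENNReal.tsum_le_tsum h2) ?_
  rw [← ENNReal.ofReal_tsum_of_nonneg (fun n => by positivity) (summable_half K)]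
  exact ENNReal.ofReal_lt_top

lemma series_weak {U : ℕ → ℝ × ℝ → ℝ} {b : ℕ → ℝ} {K : ℝ}
    (hU : ∀ n, IsTest (U n))
    (bU : ∀ n p, |pd1 (U n) p| ≤ (1 / 2) ^ n)
    (lU : ∀ n, ∫ p, |lap (U n) p| ≤ (1 / 2) ^ n)
    (hb : ∀ n, |b n| ≤ K)
    {φ : ℝ × ℝ → ℝ} (h : IsTest φ) :
    ∫ p, fser U b p * lap φ p = - ∫ p, Fser U b p * pd1 φ p := by
  have hK : 0 ≤ K := (abs_nonneg _).trans (hb 0)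
  have tl := isTest_lap h
  have t1 := isTest_pd1 h
  obtain ⟨S, hS⟩ := t1.2.exists_bound_of_continuous t1.continuous
  have hS0 : 0 ≤ S := (norm_nonneg _).trans (hS 0)
  have A := hasSum_integral_of_summable_integral_norm (μ := (volume : Measure (ℝ × ℝ)))
    (F := fun n p => b n * pd1 (U n) p * lap φ p)
    (fun n => integrable_mul_test (continuous_const.mul (isTest_pd1 (hU n)).continuous) tl) (by
      refine Summable.of_nonneg_of_le (fun n => integral_nonneg fun _ => norm_nonneg _) ?_
        ((summable_half K).mul_right (∫ p, |lap φ p|))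
      intro n
      rw [← integral_const_mul]
      refine integral_mono
        (integrable_mul_test (continuous_const.mul (isTest_pd1 (hU n)).continuous) tl).norm
        (tl.integrable.abs.const_mul _) fun p => ?_
      simp only [norm_mul _ (lap φ p), Real.norm_eq_abs (lap φ p)]
      exact mul_le_mul_of_nonneg_right (term_bound bU hb n p) (abs_nonneg _))
  have B := hasSum_integral_of_summable_integral_norm (μ := (volume : Measure (ℝ × ℝ)))
    (F := fun n p => b n * lap (U n) p * pd1 φ p)
    (fun n => integrable_mul_test (continuous_const.mul (isTest_lap (hU n)).continuous) t1) (by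
      refine Summable.of_nonneg_of_le (fun n => integral_nonneg fun _ => norm_nonneg _) ?_
        ((summable_half K).mul_right S)
      intro n
      have : ∫ p, ‖b n * lap (U n) p * pd1 φ p‖ ≤ ∫ p, (K * S) * |lap (U n) p| := by
        refine integral_mono
          (integrable_mul_test (continuous_const.mul (isTest_lap (hU n)).continuous) t1).norm
          ((isTest_lap (hU n)).integrable.abs.const_mul _) fun p => ?_
        have h1 := hS p
        rw [Real.norm_eq_abs] at h1
        simp only [Real.norm_eq_abs, abs_mul]
        calc |b n| * |lap (U n) p| * |pd1 φ p| = (|b n| * |pd1 φ p|) * |lap (U n) p| := by ring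
          _ ≤ (K * S) * |lap (U n) p| := by
            refine mul_le_mul_of_nonneg_right ?_ (abs_nonneg _)
            exact mul_le_mul (hb n) h1 (abs_nonneg _) hK
      refine this.trans ?_
      rw [integral_const_mul]
      have := mul_le_mul_of_nonneg_left (lU n) (mul_nonneg hK hS0)
      linarith)
  simp only [tsum_mul_right] at A B
  have e : ∀ n, ∫ p, b n * pd1 (U n) p * lap φ p = - ∫ p, b n * lap (U n) p * pd1 φ p := by
    intro n
    simp only [mul_assoc]
    rw [integral_const_mul, integral_const_mul, weak_id (hU n) h]
    ring
  simp only [e] at A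
  exact A.unique B.neg


lemma gauss2_radial : gauss2 = fun p => (fun s => (2 * π)⁻¹ * Real.exp (-s / 2)) (sq2 p) := by
  funext p; simp [gauss2, sq2]

lemma gauss_hasDeriv (s : ℝ) : HasDerivAt (fun s => (2 * π)⁻¹ * Real.exp (-s / 2))
    ((-1 / 2) * ((2 * π)⁻¹ * Real.exp (-s / 2))) s := by
  have := (((hasDerivAt_id s).neg.div_const 2).exp).const_mul (2 * π)⁻¹
  refine this.congr_deriv ?_
  simp; ring

lemma gauss2_pd1 (p : ℝ × ℝ) : pd1 gauss2 p = - p.1 * gauss2 p := by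
  have := congrFun (pd1_radial (fun s _ => gauss_hasDeriv s)) p
  rw [gauss2_radial, this]; ring

lemma gauss2_pd2 (p : ℝ × ℝ) : pd2 gauss2 p = - p.2 * gauss2 p := by
  have := congrFun (pd2_radial (fun s _ => gauss_hasDeriv s)) p
  rw [gauss2_radial, this]; ring

lemma gauss2_smooth : ContDiff ℝ 1 gauss2 := by
  unfold gauss2; fun_prop

lemma gauss2_pos (p : ℝ × ℝ) : 0 < gauss2 p := by unfold gauss2; positivity

lemma inv_two_pi_le : (2 * π)⁻¹ ≤ 1 := by
  apply inv_le_one_of_one_le₀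
  have := Real.pi_gt_three
  linarith

lemma gauss2_le (p : ℝ × ℝ) : gauss2 p ≤ 1 := by
  unfold gauss2
  refine mul_le_one₀ inv_two_pi_le (by positivity) ?_
  apply Real.exp_le_one_iff.2
  nlinarith [sq_nonneg p.1, sq_nonneg p.2]

lemma integrable_gauss {c : ℝ} (hc : 0 < c) :
    Integrable (fun p : ℝ × ℝ => Real.exp (-c * sq2 p)) := by
  have h := (integrable_exp_neg_mul_sq hc).mul_prod (integrable_exp_neg_mul_sq hc)
  refine h.congr (Filter.Eventually.of_forall fun p => ?_)
  simp only [← Real.exp_add]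
  congr 1
  unfold sq2; ring

lemma gauss2_integrable : Integrable gauss2 := by
  have h := (integrable_gauss (c := 1 / 2) (by norm_num)).const_mul (2 * π)⁻¹
  refine h.congr (Filter.Eventually.of_forall fun p => ?_)
  simp only [gauss2, sq2]
  congr 2; ring

lemma emag_continuous : Continuous emag := by unfold emag; fun_prop

lemma emag_nonneg (p : ℝ × ℝ) : 0 ≤ emag p := Real.sqrt_nonneg _

lemma emag_gauss_integrable : Integrable (fun p => emag p * gauss2 p) := by
  refine (integrable_gauss (c := 1 / 4) (by norm_num)).mono'
    (emag_continuous.mul gauss2_smooth.continuous).aestronglyMeasurable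
    (Filter.Eventually.of_forall fun p => ?_)
  rw [Real.norm_eq_abs, abs_of_nonneg (mul_nonneg (emag_nonneg p) (gauss2_pos p).le)]
  have h0 := sq2_nonneg p
  have h1 : emag p ≤ Real.exp (sq2 p / 4) := by
    have e : emag p = Real.sqrt (sq2 p) := rfl
    have h2 := Real.add_one_le_exp (sq2 p / 4)
    have h3 := Real.sq_sqrt h0
    rw [e]
    nlinarith [sq_nonneg (Real.sqrt (sq2 p) / 2 - 1)]
  have h2 : gauss2 p ≤ Real.exp (-(sq2 p) / 2) := by
    have : gauss2 p = (2 * π)⁻¹ * Real.exp (-(sq2 p) / 2) := rfl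
    rw [this]
    exact mul_le_of_le_one_left (Real.exp_pos _).le inv_two_pi_le
  calc emag p * gauss2 p ≤ Real.exp (sq2 p / 4) * Real.exp (-(sq2 p) / 2) :=
        mul_le_mul h1 h2 (gauss2_pos p).le (Real.exp_pos _).le
    _ = Real.exp (-(1 / 4) * sq2 p) := by rw [← Real.exp_add]; congr 1; ring

lemma emag_le (p : ℝ × ℝ) : emag p ≤ |p.1| + |p.2| := by
  unfold emag
  rw [Real.sqrt_le_left (by positivity)]
  nlinarith [sq_abs p.1, sq_abs p.2, mul_nonneg (abs_nonneg p.1) (abs_nonneg p.2)]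

lemma gauss_weak {φ : ℝ × ℝ → ℝ} (h : IsTest φ) :
    ∫ p, gauss2 p * (lap φ p - p.1 * pd1 φ p - p.2 * pd2 φ p) = 0 := by
  have t1 := isTest_pd1 h
  have t2 := isTest_pd2 h
  have a1 : ∫ p, gauss2 p * pd1 (pd1 φ) p = - ∫ p, pd1 gauss2 p * pd1 φ p :=
    ibp gauss2_smooth t1 _
  have a2 : ∫ p, gauss2 p * pd2 (pd2 φ) p = - ∫ p, pd2 gauss2 p * pd2 φ p :=
    ibp gauss2_smooth t2 _
  simp only [gauss2_pd1, gauss2_pd2] at a1 a2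
  have hc := gauss2_smooth.continuous
  have i1 := integrable_mul_test hc (isTest_pd1 t1)
  have i2 := integrable_mul_test hc (isTest_pd2 t2)
  have i3 : Integrable (fun p : ℝ × ℝ => -p.1 * gauss2 p * pd1 φ p) :=
    integrable_mul_test (continuous_fst.neg.mul hc) t1
  have i4 : Integrable (fun p : ℝ × ℝ => -p.2 * gauss2 p * pd2 φ p) :=
    integrable_mul_test (continuous_snd.neg.mul hc) t2
  have e : ∀ p : ℝ × ℝ, gauss2 p * (lap φ p - p.1 * pd1 φ p - p.2 * pd2 φ p) =
      (gauss2 p * pd1 (pd1 φ) p + gauss2 p * pd2 (pd2 φ) p) +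
      (-p.1 * gauss2 p * pd1 φ p + -p.2 * gauss2 p * pd2 φ p) := by
    intro p; unfold lap; ring
  simp only [e]
  have k := integral_add (i1.add i2) (i3.add i4)
  have k1 := integral_add i1 i2
  have k2 := integral_add i3 i4
  simp only [Pi.add_apply] at k k1 k2
  rw [k, k1, k2, a1, a2]
  ring

def del : ℝ := (2 * π)⁻¹ * Real.exp (-49)

lemma del_pos : 0 < del := by unfold del; positivity

lemma del_le {p : ℝ × ℝ} (hp : ‖p‖ ≤ 7) : del ≤ gauss2 p := by
  unfold del gauss2
  have h1 : |p.1| ≤ 7 := (norm_fst_le p).trans hp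
  have h2 : |p.2| ≤ 7 := (norm_snd_le p).trans hp
  rw [abs_le] at h1 h2
  refine mul_le_mul_of_nonneg_left (Real.exp_le_exp.2 ?_) (by positivity)
  nlinarith

lemma fderiv_split (φ : ℝ × ℝ → ℝ) (p w : ℝ × ℝ) :
    fderiv ℝ φ p w = w.1 * pd1 φ p + w.2 * pd2 φ p := by
  have : w = w.1 • ((1 : ℝ), (0 : ℝ)) + w.2 • ((0 : ℝ), (1 : ℝ)) := by
    ext <;> simp
  conv_lhs => rw [this]
  rw [map_add, map_smul, map_smul]
  rfl

def Zc (f : ℝ × ℝ → ℝ) : ℝ := ∫ p, (gauss2 p + f p)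
def rho (f : ℝ × ℝ → ℝ) (p : ℝ × ℝ) : ℝ := (Zc f)⁻¹ * (gauss2 p + f p)
def vf (f F : ℝ × ℝ → ℝ) (p : ℝ × ℝ) : ℝ × ℝ :=
  ((gauss2 p + f p)⁻¹ * (f p * p.1 + F p), (gauss2 p + f p)⁻¹ * (f p * p.2))

lemma cs_of_zero {E : Type*} [Zero E] {f : ℝ × ℝ → E} (hz : ∀ p, 7 < ‖p‖ → f p = 0) :
    HasCompactSupport f := by
  refine HasCompactSupport.intro (isCompact_closedBall (0 : ℝ × ℝ) 7) fun p hp => hz p ?_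
  simpa using hp

lemma construct {f F : ℝ × ℝ → ℝ} (hf : Continuous f) (hfz : ∀ p, 7 < ‖p‖ → f p = 0)
    (hfG : ∀ p, |f p| ≤ gauss2 p / 2) (hFm : Measurable F) (hFi : Integrable F)
    (hFz : ∀ p, 7 < ‖p‖ → F p = 0)
    (hw : ∀ φ, IsTest φ → ∫ p, f p * lap φ p = - ∫ p, F p * pd1 φ p) :
    0 < Zc f ∧
      Measurable (vf f F) ∧ HasCompactSupport (vf f F) ∧
      Integrable (fun p => emag (vf f F p)) ∧
      Continuous (rho f) ∧ (∀ p, 0 ≤ rho f p) ∧ (∫ p, rho f p = 1) ∧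
      (∃ c R : ℝ, ∀ p : ℝ × ℝ, R ≤ emag p → rho f p = c * gauss2 p) ∧
      (∀ φ : ℝ × ℝ → ℝ, IsTest φ →
        ∫ p, (pd1 (pd1 φ) p + pd2 (pd2 φ) p + fderiv ℝ φ p (-p + vf f F p)) * rho f p = 0) ∧
      Integrable (fun p => emag p * rho f p) ∧
      Integrable (fun p => emag (vf f F p) * rho f p) := by
  have hGc := gauss2_smooth.continuous
  have hfc : HasCompactSupport f := cs_of_zero hfz
  have hfi : Integrable f := hf.integrable_of_hasCompactSupport hfc
  have hGf : ∀ p, gauss2 p / 2 ≤ gauss2 p + f p := fun p => by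
    have := neg_abs_le (f p); have := hfG p; linarith
  have hpos : ∀ p, 0 < gauss2 p + f p := fun p => by
    have := gauss2_pos p; have := hGf p; linarith
  have hi : Integrable (fun p => gauss2 p + f p) := gauss2_integrable.add hfi
  have hZ : 0 < Zc f := by
    unfold Zc
    rw [integral_pos_iff_support_of_nonneg (fun p => (hpos p).le) hi]
    have : Function.support (fun p => gauss2 p + f p) = Set.univ := by
      ext p; simpa using (hpos p).ne'
    rw [this]; simp
  have hrc : Continuous (rho f) := continuous_const.mul (hGc.add hf)
  have hr0 : ∀ p, 0 ≤ rho f p := fun p => mul_nonneg (inv_nonneg.2 hZ.le) (hpos p).le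
  have hr1 : ∀ p, rho f p ≤ (Zc f)⁻¹ * 2 * gauss2 p := fun p => by
    unfold rho
    have := le_abs_self (f p); have := hfG p; have := gauss2_pos p
    rw [mul_assoc]
    exact mul_le_mul_of_nonneg_left (by linarith) (inv_nonneg.2 hZ.le)
  have hvm : Measurable (vf f F) := by
    have h1 : Measurable (fun p => (gauss2 p + f p)⁻¹) := (hGc.add hf).measurable.inv
    refine Measurable.prodMk (h1.mul ((hf.measurable.mul measurable_fst).add hFm))
      (h1.mul (hf.measurable.mul measurable_snd))
  have hvi : Integrable (fun p => emag (vf f F p)) := by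
    have j1 : Integrable (fun p : ℝ × ℝ => f p * p.1) :=
      (hf.mul continuous_fst).integrable_of_hasCompactSupport hfc.mul_right
    have j2 : Integrable (fun p : ℝ × ℝ => f p * p.2) :=
      (hf.mul continuous_snd).integrable_of_hasCompactSupport hfc.mul_right
    have j := ((j1.abs.add hFi.abs).add j2.abs).const_mul (2 / del)
    refine j.mono' (emag_continuous.measurable.comp hvm).aestronglyMeasurable
      (Filter.Eventually.of_forall fun p => ?_)
    rw [Real.norm_eq_abs, abs_of_nonneg (emag_nonneg _)]
    refine (emag_le _).trans ?_
    simp only [Pi.add_apply]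
    by_cases hp : ‖p‖ ≤ 7
    · have hb : (gauss2 p + f p)⁻¹ ≤ 2 / del := by
        rw [← inv_div]
        refine inv_anti₀ (by have := del_pos; positivity) ?_
        have := hGf p; have := del_le hp; linarith
      have hq : 0 ≤ (gauss2 p + f p)⁻¹ := inv_nonneg.2 (hpos p).le
      simp only [vf, abs_mul (gauss2 p + f p)⁻¹, abs_of_nonneg hq]
      rw [← mul_add]
      refine mul_le_mul hb ?_ (by positivity) (hq.trans hb)
      have := abs_add_le (f p * p.1) (F p)
      linarith
    · push Not at hp
      simp [vf, hfz p hp, hFz p hp]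
  refine ⟨hZ, hvm, ?_, hvi, hrc, hr0, ?_, ?_, ?_, ?_, ?_⟩
  · refine cs_of_zero fun p hp => ?_
    simp [vf, hfz p hp, hFz p hp]
  · unfold rho
    rw [integral_const_mul]
    exact inv_mul_cancel₀ hZ.ne'
  · refine ⟨(Zc f)⁻¹, 20, fun p hp => ?_⟩
    have : 7 < ‖p‖ := by
      have h1 := emag_le p
      have h2 : |p.1| ≤ ‖p‖ := norm_fst_le p
      have h3 : |p.2| ≤ ‖p‖ := norm_snd_le p
      linarith
    simp [rho, hfz p this]
  · intro φ h
    have e : ∀ p, (pd1 (pd1 φ) p + pd2 (pd2 φ) p + fderiv ℝ φ p (-p + vf f F p)) * rho f p =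
        (Zc f)⁻¹ * (gauss2 p * (lap φ p - p.1 * pd1 φ p - p.2 * pd2 φ p) +
          (f p * lap φ p + F p * pd1 φ p)) := by
      intro p
      rw [fderiv_split]
      have hne := (hpos p).ne'
      simp only [vf, rho, lap, Prod.fst_add, Prod.snd_add, Prod.fst_neg, Prod.snd_neg]
      field_simp
      ring
    simp only [e]
    rw [integral_const_mul]
    have k0 : Integrable (fun p : ℝ × ℝ =>
        gauss2 p * (lap φ p - p.1 * pd1 φ p - p.2 * pd2 φ p)) := by
      have i1 := integrable_mul_test hGc (isTest_lap h)
      have i2 : Integrable (fun p : ℝ × ℝ => gauss2 p * p.1 * pd1 φ p) :=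
        integrable_mul_test (hGc.mul continuous_fst) (isTest_pd1 h)
      have i3 : Integrable (fun p : ℝ × ℝ => gauss2 p * p.2 * pd2 φ p) :=
        integrable_mul_test (hGc.mul continuous_snd) (isTest_pd2 h)
      refine ((i1.sub i2).sub i3).congr (Filter.Eventually.of_forall fun p => ?_)
      simp only [Pi.sub_apply]; ring
    have k1 := integrable_mul_test hf (isTest_lap h)
    have k2 : Integrable (fun p => F p * pd1 φ p) := by
      obtain ⟨C, hC⟩ := (isTest_pd1 h).continuous.bounded_above_of_compact_support (isTest_pd1 h).2
      exact hFi.mul_bdd (isTest_pd1 h).continuous.aestronglyMeasurable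
        (Filter.Eventually.of_forall hC)
    have m := integral_add k0 (k1.add k2)
    have m2 := integral_add k1 k2
    simp only [Pi.add_apply] at m m2
    rw [m, m2, gauss_weak h, hw φ h]
    ring
  · refine (emag_gauss_integrable.const_mul ((Zc f)⁻¹ * 2)).mono'
      (emag_continuous.mul hrc).aestronglyMeasurable (Filter.Eventually.of_forall fun p => ?_)
    rw [Real.norm_eq_abs, abs_of_nonneg (mul_nonneg (emag_nonneg _) (hr0 p))]
    have := mul_le_mul_of_nonneg_left (hr1 p) (emag_nonneg p)
    linarith
  · refine (hvi.const_mul ((Zc f)⁻¹ * 2)).mono'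
      (((emag_continuous.measurable.comp hvm).mul hrc.measurable).aestronglyMeasurable)
      (Filter.Eventually.of_forall fun p => ?_)
    have hz2 : 0 ≤ (Zc f)⁻¹ * 2 := by positivity
    rw [Real.norm_eq_abs, abs_of_nonneg (mul_nonneg (emag_nonneg _) (hr0 p))]
    have h1 : rho f p ≤ (Zc f)⁻¹ * 2 :=
      (hr1 p).trans (mul_le_of_le_one_right hz2 (gauss2_le p))
    have := mul_le_mul_of_nonneg_left h1 (emag_nonneg (vf f F p))
    linarith

def zet (p : ℝ × ℝ) : ℝ := chi (sq2 p / 98)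

lemma zet_test : IsTest zet := by
  refine ⟨chi_smooth.comp (sq2_smooth.div_const _), ?_⟩
  refine HasCompactSupport.intro (isCompact_closedBall (0 : ℝ × ℝ) 20) fun p hp => ?_
  have h1 : 20 < ‖p‖ := by simpa using hp
  refine chi_zero ?_
  have := norm_sq_le_sq2 p
  nlinarith

lemma zet_one {p : ℝ × ℝ} (hp : ‖p‖ ≤ 7) : zet p = 1 := by
  refine chi_one ?_
  have h1 : |p.1| ≤ 7 := (norm_fst_le p).trans hp
  have h2 : |p.2| ≤ 7 := (norm_snd_le p).trans hp
  rw [abs_le] at h1 h2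
  unfold sq2
  nlinarith

lemma abs_snd_le_emag (p : ℝ × ℝ) : |p.2| ≤ emag p := by
  unfold emag
  rw [← Real.sqrt_sq_eq_abs]
  exact Real.sqrt_le_sqrt (by nlinarith [sq_nonneg p.1])

lemma bounded_of_W11 {f : ℝ × ℝ → ℝ} (hf : Continuous f) (hZ : 0 < Zc f)
    (hW : MemW11loc (rho f)) {Φ : ℕ → ℝ × ℝ → ℝ} (hΦ : ∀ n, IsTest (Φ n))
    (sΦ : ∀ n, tsupport (Φ n) ⊆ Metric.closedBall 0 7) (bΦ : ∀ n p, |Φ n p| ≤ 1) :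
    ∃ C, ∀ n, |∫ p, f p * pd2 (Φ n) p| ≤ C := by
  obtain ⟨-, g₁, g₂, -, hg, -, hw⟩ := hW zet zet_test
  refine ⟨Zc f * (∫ p, |g₂ p|) + ∫ p, emag p * gauss2 p, fun n => ?_⟩
  have hGc := gauss2_smooth.continuous
  have t2 := isTest_pd2 (hΦ n)
  have a1 : |∫ p, g₂ p * Φ n p| ≤ ∫ p, |g₂ p| := by
    rw [← Real.norm_eq_abs]
    refine norm_integral_le_of_norm_le hg.abs (Filter.Eventually.of_forall fun p => ?_)
    rw [Real.norm_eq_abs, abs_mul]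
    exact mul_le_of_le_one_right (abs_nonneg _) (bΦ n p)
  have a2 : |∫ p, gauss2 p * pd2 (Φ n) p| ≤ ∫ p, emag p * gauss2 p := by
    have : ∫ p, gauss2 p * pd2 (Φ n) p = - ∫ p, pd2 gauss2 p * Φ n p :=
      ibp gauss2_smooth (hΦ n) _
    rw [this, abs_neg, ← Real.norm_eq_abs]
    refine norm_integral_le_of_norm_le emag_gauss_integrable
      (Filter.Eventually.of_forall fun p => ?_)
    rw [gauss2_pd2, Real.norm_eq_abs, abs_mul, abs_mul, abs_neg, abs_of_pos (gauss2_pos p)]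
    have h1 := abs_snd_le_emag p
    have h2 := gauss2_pos p
    calc |p.2| * gauss2 p * |Φ n p| ≤ |p.2| * gauss2 p :=
          mul_le_of_le_one_right (by positivity) (bΦ n p)
      _ ≤ _ := mul_le_mul_of_nonneg_right h1 h2.le
  have e : ∀ p, zet p * rho f p * pd2 (Φ n) p =
      (Zc f)⁻¹ * (gauss2 p * pd2 (Φ n) p + f p * pd2 (Φ n) p) := by
    intro p
    by_cases hp : ‖p‖ ≤ 7
    · rw [zet_one hp]; unfold rho; ring
    · push Not at hp
      have : pd2 (Φ n) p = 0 :=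
        zero_of_tsupport ((tsupport_fderiv_apply_sub _).trans (sΦ n)) hp
      simp [this]
  have hk := hw (Φ n) (hΦ n)
  simp only [e] at hk
  have m := integral_add (integrable_mul_test hGc t2) (integrable_mul_test hf t2)
  rw [integral_const_mul, m] at hk
  have hk2 : ∫ p, f p * pd2 (Φ n) p =
      - (Zc f * ∫ p, g₂ p * Φ n p) - ∫ p, gauss2 p * pd2 (Φ n) p := by
    rw [hk]; field_simp; ring
  rw [hk2]
  refine (abs_sub _ _).trans ?_
  rw [abs_neg, abs_mul, abs_of_pos hZ]
  exact add_le_add (mul_le_mul_of_nonneg_left a1 hZ.le) a2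

lemma bcf_abs (a : BoundedContinuousFunction ℕ ℝ) (n : ℕ) : |a n| ≤ ‖a‖ := a.norm_coe_le_norm n

lemma exists_functional {U : ℕ → ℝ × ℝ → ℝ} (hU : ∀ n, IsTest (U n))
    (bU : ∀ n p, |pd1 (U n) p| ≤ (1 / 2) ^ n) {ψ : ℝ × ℝ → ℝ} (hψ : IsTest ψ) :
    ∃ L : BoundedContinuousFunction ℕ ℝ →L[ℝ] ℝ, ∀ a, L a = ∫ p, fser U a p * ψ p := by
  have hi : ∀ a : BoundedContinuousFunction ℕ ℝ, Integrable (fun p => fser U a p * ψ p) :=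
    fun a => integrable_mul_test (fser_continuous hU bU (bcf_abs a)) hψ
  let L0 : BoundedContinuousFunction ℕ ℝ →ₗ[ℝ] ℝ :=
    { toFun := fun a => ∫ p, fser U a p * ψ p
      map_add' := by
        intro a c
        have : ∀ p, fser U (a + c : BoundedContinuousFunction ℕ ℝ) p * ψ p =
            fser U a p * ψ p + fser U c p * ψ p := by
          intro p
          rw [← add_mul]
          congr 1
          unfold fser
          rw [← (fser_summable bU (bcf_abs a) p).tsum_add (fser_summable bU (bcf_abs c) p)]
          refine tsum_congr fun n => ?_
          simp only [BoundedContinuousFunction.coe_add, Pi.add_apply]; ring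
        simp only [this]
        exact integral_add (hi a) (hi c)
      map_smul' := by
        intro r a
        have : ∀ p, fser U (r • a : BoundedContinuousFunction ℕ ℝ) p * ψ p =
            r * (fser U a p * ψ p) := by
          intro p
          rw [← mul_assoc]
          congr 1
          unfold fser
          rw [← tsum_mul_left]
          refine tsum_congr fun n => ?_
          simp only [BoundedContinuousFunction.coe_smul, smul_eq_mul]; ring
        simp only [this]
        exact integral_const_mul _ _ }
  refine ⟨L0.mkContinuous (2 * ∫ p, |ψ p|) fun a => ?_, fun a => rfl⟩
  change ‖∫ p, fser U a p * ψ p‖ ≤ _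
  have hh := hψ.integrable.abs.const_mul (‖a‖ * 2)
  refine (norm_integral_le_of_norm_le hh (Filter.Eventually.of_forall fun p => ?_)).trans ?_
  · rw [Real.norm_eq_abs, abs_mul]
    exact mul_le_mul_of_nonneg_right (fser_bound bU (bcf_abs a) p) (abs_nonneg _)
  · rw [integral_const_mul]; apply le_of_eq; ring

lemma exists_unit (n : ℕ) : ∃ e : BoundedContinuousFunction ℕ ℝ, ‖e‖ ≤ 1 ∧
    ∀ U : ℕ → ℝ × ℝ → ℝ, ∀ p, fser U e p = pd1 (U n) p := by
  refine ⟨BoundedContinuousFunction.ofNormedAddCommGroupDiscrete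
    (fun k => if k = n then (1 : ℝ) else 0) 1 ?_, ?_, ?_⟩
  · intro k; split_ifs <;> simp
  · refine (BoundedContinuousFunction.norm_le zero_le_one).2 fun k => ?_
    simp only [BoundedContinuousFunction.coe_ofNormedAddCommGroupDiscrete]
    split_ifs <;> simp
  · intro U p
    unfold fser
    rw [tsum_eq_single n]
    · simp
    · intro k hk; simp [hk]
/-- There exist a compactly supported Borel vector field `v` on `ℝ²` with `|v| ∈ L¹` and a
continuous probability density `ϱ`, proportional to the standard Gaussian density outside of
some ball, such that the measure `μ = ϱ dx` solves the Fokker–Planck–Kolmogorov equation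
`L_b^* μ = 0` with drift `b(x) = -x + v(x)` (i.e. `∫ [Δφ + ⟨b,∇φ⟩] ϱ dx = 0` for all test
functions `φ`), with `|x|, |v| ∈ L¹(μ)`, but `ϱ ∉ W^{1,1}_loc(ℝ²)`. -/
theorem gaussian_perturbation_FPK_not_W11loc :
    ∃ (v : ℝ × ℝ → ℝ × ℝ) (ϱ : ℝ × ℝ → ℝ),
      Measurable v ∧ HasCompactSupport v ∧ Integrable (fun p => emag (v p)) ∧
      Continuous ϱ ∧ (∀ p, 0 ≤ ϱ p) ∧ (∫ p, ϱ p = 1) ∧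
      (∃ c R : ℝ, ∀ p : ℝ × ℝ, R ≤ emag p → ϱ p = c * gauss2 p) ∧
      (∀ φ : ℝ × ℝ → ℝ, IsTest φ →
        ∫ p, (pd1 (pd1 φ) p + pd2 (pd2 φ) p + fderiv ℝ φ p (-p + v p)) * ϱ p = 0) ∧
      Integrable (fun p => emag p * ϱ p) ∧
      Integrable (fun p => emag (v p) * ϱ p) ∧
      ¬ MemW11loc ϱ := by
  by_contra H
  choose U Φ hU hΦ sU sΦ bΦ bU lU hn using block_lemma
  choose L hL using fun n => exists_functional hU bU (isTest_pd2 (hΦ n))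
  have key : ∀ a : BoundedContinuousFunction ℕ ℝ, ∃ C, ∀ n, ‖L n a‖ ≤ C := by
    intro a
    obtain ⟨s, hs, hsa⟩ : ∃ s : ℝ, 0 < s ∧ s * ‖a‖ * 2 ≤ del / 2 := by
      have hd := del_pos
      have ha := norm_nonneg a
      refine ⟨del / (4 * (‖a‖ + 1)), by positivity, ?_⟩
      rw [div_mul_eq_mul_div, div_mul_eq_mul_div, div_le_div_iff₀ (by positivity) (by positivity)]
      nlinarith
    obtain ⟨b, hba⟩ : ∃ b : BoundedContinuousFunction ℕ ℝ, b = s • a := ⟨_, rfl⟩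
    have hb : ∀ n, |b n| ≤ s * ‖a‖ := by
      intro n
      rw [hba, BoundedContinuousFunction.smul_apply, smul_eq_mul, abs_mul, abs_of_pos hs]
      exact mul_le_mul_of_nonneg_left (bcf_abs a n) hs.le
    have hf := fser_continuous hU bU hb
    have hfG : ∀ p, |fser U b p| ≤ gauss2 p / 2 := by
      intro p
      by_cases hp : ‖p‖ ≤ 7
      · have := del_le hp
        have := fser_bound bU hb p
        linarith
      · push Not at hp
        rw [fser_zero sU hp, abs_zero]
        have := gauss2_pos p
        linarith
    obtain ⟨hZ, c1, c2, c3, c4, c5, c6, c7, c8, c9, c10⟩ :=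
      construct hf (fun p hp => fser_zero sU hp) hfG (Fser_measurable hU)
        (Fser_integrable hU lU hb) (fun p hp => Fser_zero sU hp)
        (fun φ h => series_weak hU bU lU hb h)
    have hW : MemW11loc (rho (fser U b)) := by
      by_contra hN
      exact H ⟨_, _, c1, c2, c3, c4, c5, c6, c7, c8, c9, c10, hN⟩
    obtain ⟨C, hC⟩ := bounded_of_W11 hf hZ hW hΦ sΦ bΦ
    refine ⟨C / s, fun n => ?_⟩
    have h1 := hC n
    rw [← hL n b, hba, map_smul, smul_eq_mul, abs_mul, abs_of_pos hs] at h1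
    rw [le_div_iff₀ hs, mul_comm]
    exact h1
  obtain ⟨C, hC⟩ := banach_steinhaus key
  obtain ⟨n, hnC⟩ := exists_nat_gt C
  obtain ⟨e, he, heU⟩ := exists_unit n
  have h1 : (n : ℝ) ≤ L n e := by
    rw [hL]; simp only [heU]; exact hn n
  have h2 : L n e ≤ C := by
    refine (le_abs_self _).trans (((L n).le_opNorm e).trans ?_)
    exact (mul_le_of_le_one_right (norm_nonneg _) he).trans (hC n)
  linarith
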